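/- Let n ≥ 1, let 0 < α ≤ ∞, and let f : [0,α) → ℝ be continuous such that g(t) = f(t)/t is matrix monotone of order n on (0,α). Let a be an n×n positive definite Hermitian complex matrix with all eigenvalues in (0,α), and let c be an n×n complex matrix with c*c ≤ 1. Then c f(c*ac) c* ≤ c c* f(a) c c* in the Loewner order. -/

import Mathlib

/-!
Write `g t = f t / t`. If `0 < x ≤ a`, then `g x ≤ g a`, and conjugating by `x` gives
`x * f x ≤ x * g a * x`. The left side makes sense for singular `x` too, and continuity of `f`
extends the inequality to `0 ≤ x ≤ a`, along the path `x + ε (a - x)`, which never leaves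
the order interval `[0, a]`.

Now let `b = a^{1/2}` and `u = b c`. Then `x = u u*` satisfies `0 ≤ x ≤ a`, and
`u u* f(u u*) = u f(u* u) u*`, so the inequality reads `b (c f(c* a c) c*) b ≤ b (c c* f(a) c c*) b`
because `b * g a * b = f a`. Cancelling the invertible matrix `b` gives the claim.
-/

open Matrix Set MeasureTheory
open scoped ComplexOrder

/-- `f` is matrix monotone of order `n` on the set `I ⊆ ℝ`: for all `n × n` Hermitian complex
matrices `A, B` with spectra contained in `I`, `A ≤ B` in the Loewner order (i.e. `B - A` is
positive semidefinite) implies `f(A) ≤ f(B)`, where `f(A)` is given by the continuous functional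
calculus (applying `f` to the eigenvalues in a spectral decomposition). -/
def MatrixMonotoneOn (n : ℕ) (f : ℝ → ℝ) (I : Set ℝ) : Prop :=
  ∀ A B : Matrix (Fin n) (Fin n) ℂ, A.IsHermitian → B.IsHermitian →
    spectrum ℝ A ⊆ I → spectrum ℝ B ⊆ I → (B - A).PosSemidef →
    (cfc f B - cfc f A).PosSemidef

/-- `f` is matrix convex of order `n` on the set `I ⊆ ℝ`: for all `n × n` Hermitian complex
matrices `A, B` with spectra contained in `I` and all `l ∈ [0,1]`,
`f(l•A + (1-l)•B) ≤ l•f(A) + (1-l)•f(B)` in the Loewner order. -/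
def MatrixConvexOn (n : ℕ) (f : ℝ → ℝ) (I : Set ℝ) : Prop :=
  ∀ A B : Matrix (Fin n) (Fin n) ℂ, A.IsHermitian → B.IsHermitian →
    spectrum ℝ A ⊆ I → spectrum ℝ B ⊆ I → ∀ l : ℝ, 0 ≤ l → l ≤ 1 →
    (l • cfc f A + (1 - l) • cfc f B - cfc f (l • A + (1 - l) • B)).PosSemidef

open scoped MatrixOrder

section FunctionalCalculus

variable {m n : Type*} [Fintype m] [DecidableEq m] [Fintype n] [DecidableEq n]

lemma aeval_mul_eq_mul_aeval {R S : Type*} [CommSemiring R] [Semiring S] [Algebra R S]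
    (q : Polynomial R) {A : Matrix m m S} {B : Matrix n n S} {u : Matrix m n S}
    (h : A * u = u * B) : q.aeval A * u = u * q.aeval B := by
  induction q using Polynomial.induction_on with
  | C r => simp [Algebra.algebraMap_eq_smul_one]
  | add p q hp hq => simp only [map_add, Matrix.add_mul, Matrix.mul_add, hp, hq]
  | monomial k r ih =>
    simp only [pow_succ, ← mul_assoc, map_mul _ _ Polynomial.X, Polynomial.aeval_X] at ih ⊢
    rw [Matrix.mul_assoc, h, ← Matrix.mul_assoc, ih, Matrix.mul_assoc]

variable {𝕜 : Type*} [RCLike 𝕜]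

lemma cfc_mul_eq_mul_cfc (f : ℝ → ℝ) {A : Matrix m m 𝕜} {B : Matrix n n 𝕜} {u : Matrix m n 𝕜}
    (hA : A.IsHermitian) (hB : B.IsHermitian) (h : A * u = u * B) :
    cfc f A * u = u * cfc f B := by
  have hfin : (spectrum ℝ A ∪ spectrum ℝ B).Finite :=
    finite_real_spectrum.union finite_real_spectrum
  -- interpolation on a finite set reduces the claim to polynomials
  obtain ⟨q, hq⟩ : ∃ q : Polynomial ℝ, (spectrum ℝ A ∪ spectrum ℝ B).EqOn f q.eval :=
    ⟨Lagrange.interpolate hfin.toFinset id f, fun x hx =>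
      (Lagrange.eval_interpolate_at_node (v := id) f Function.injective_id.injOn
        (hfin.mem_toFinset.mpr hx)).symm⟩
  rw [cfc_congr (hq.mono subset_union_left), cfc_congr (hq.mono subset_union_right),
    cfc_polynomial q A hA.isSelfAdjoint, cfc_polynomial q B hB.isSelfAdjoint,
    aeval_mul_eq_mul_aeval q h]

lemma mul_conjTranspose_mul_cfc (f : ℝ → ℝ) (u : Matrix m n 𝕜) :
    u * uᴴ * cfc f (u * uᴴ) = u * cfc f (uᴴ * u) * uᴴ := by
  have h : cfc f (uᴴ * u) * uᴴ = uᴴ * cfc f (u * uᴴ) :=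
    cfc_mul_eq_mul_cfc f (isHermitian_conjTranspose_mul_self u)
      (isHermitian_mul_conjTranspose_self u) (Matrix.mul_assoc ..)
  rw [Matrix.mul_assoc, ← h, Matrix.mul_assoc]

lemma cfc_div_mul_self (f : ℝ → ℝ) {A : Matrix n n 𝕜} (hA : A.PosDef) :
    cfc (fun t => f t / t) A * A = cfc f A := by
  have hcont (φ : ℝ → ℝ) : ContinuousOn φ (spectrum ℝ A) := finite_real_spectrum.continuousOn φ
  calc cfc (fun t => f t / t) A * A
      = cfc (fun t => f t / t) A * cfc (fun t => t) A := by
        rw [cfc_id' ℝ A hA.isHermitian.isSelfAdjoint]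
    _ = cfc (fun t => f t / t * t) A := (cfc_mul _ _ A (hcont _) (hcont _)).symm
    _ = cfc f A := cfc_congr fun t ht =>
        div_mul_cancel₀ _ (hA.isStrictlyPositive.spectrum_pos ht).ne'

lemma sqrt_mul_cfc_div_mul_sqrt (f : ℝ → ℝ) {A : Matrix n n 𝕜} (hA : A.PosDef) :
    CFC.sqrt A * cfc (fun t => f t / t) A * CFC.sqrt A = cfc f A := by
  have hsqrt : CFC.sqrt A * CFC.sqrt A = A := CFC.sqrt_mul_sqrt_self A hA.posSemidef.nonneg
  have hcomm : Commute A (CFC.sqrt A) := by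
    rw [commute_iff_eq, ← hsqrt, mul_assoc]
    simp only [hsqrt]
  rw [← (hcomm.cfc_real _).eq, mul_assoc, hsqrt, cfc_div_mul_self f hA]

end FunctionalCalculus

section LoewnerOrder

variable {m n 𝕜 : Type*} [Fintype m] [DecidableEq m] [Fintype n] [DecidableEq n] [RCLike 𝕜]

lemma mul_conjTranspose_le_one_iff {c : Matrix m n 𝕜} : c * cᴴ ≤ 1 ↔ cᴴ * c ≤ 1 := by
  -- `1 - c * cᴴ` and `1 - cᴴ * c` are the two Schur complements of `[1 c; cᴴ 1]`
  let := invertibleOne (α := Matrix m m 𝕜)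
  let := invertibleOne (α := Matrix n n 𝕜)
  have h₁ := PosDef.fromBlocks₁₁ (A := (1 : Matrix m m 𝕜)) c 1 .one
  have h₂ := PosDef.fromBlocks₂₂ (D := (1 : Matrix n n 𝕜)) 1 c .one
  rw [inv_one, Matrix.mul_one] at h₁ h₂
  rw [Matrix.le_iff, Matrix.le_iff, ← h₁, ← h₂]

lemma spectrum_subset_Ioc_of_le_algebraMap {A : Matrix n n 𝕜} {M : ℝ} (hA : A.PosDef)
    (hAM : A ≤ algebraMap ℝ _ M) : spectrum ℝ A ⊆ Ioc 0 M := fun _ ht =>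
  ⟨hA.isStrictlyPositive.spectrum_pos ht,
    (le_algebraMap_iff_spectrum_le (ha := hA.isHermitian.isSelfAdjoint)).1 hAM _ ht⟩

lemma spectrum_subset_Icc_of_le_algebraMap {A : Matrix n n 𝕜} {M : ℝ} (hA : 0 ≤ A)
    (hAM : A ≤ algebraMap ℝ _ M) : spectrum ℝ A ⊆ Icc 0 M := fun _ ht =>
  ⟨spectrum_nonneg_of_nonneg hA ht,
    (le_algebraMap_iff_spectrum_le (ha := .of_nonneg hA)).1 hAM _ ht⟩

end LoewnerOrder

section MatrixMonotone

variable {n : ℕ} {f : ℝ → ℝ} {M : ℝ} {x a : Matrix (Fin n) (Fin n) ℂ}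

lemma MatrixMonotoneOn.mono {s t : Set ℝ} (hf : MatrixMonotoneOn n f t) (hst : s ⊆ t) :
    MatrixMonotoneOn n f s := fun A B hA hB hAs hBs =>
  hf A B hA hB (hAs.trans hst) (hBs.trans hst)

lemma mul_cfc_le_mul_cfc_div_mul_of_posDef
    (hg : MatrixMonotoneOn n (fun t => f t / t) (Ioc 0 M)) (haM : a ≤ algebraMap ℝ _ M)
    (hx : x.PosDef) (ha : a.PosDef) (hxa : x ≤ a) :
    x * cfc f x ≤ x * cfc (fun t => f t / t) a * x := by
  have hle : cfc (fun t => f t / t) x ≤ cfc (fun t => f t / t) a :=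
    hg x a hx.isHermitian ha.isHermitian (spectrum_subset_Ioc_of_le_algebraMap hx (hxa.trans haM))
      (spectrum_subset_Ioc_of_le_algebraMap ha haM) hxa
  calc x * cfc f x = x * cfc (fun t => f t / t) x * x := by
        rw [mul_assoc, cfc_div_mul_self f hx]
    _ ≤ x * cfc (fun t => f t / t) a * x :=
        hx.isHermitian.isSelfAdjoint.conjugate_le_conjugate hle

open Filter in
open scoped Matrix.Norms.L2Operator Topology in
lemma mul_cfc_le_mul_cfc_div_mul (hf : ContinuousOn f (Icc 0 M))
    (hg : MatrixMonotoneOn n (fun t => f t / t) (Ioc 0 M)) (haM : a ≤ algebraMap ℝ _ M)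
    (hx : 0 ≤ x) (ha : a.PosDef) (hxa : x ≤ a) :
    x * cfc f x ≤ x * cfc (fun t => f t / t) a * x := by
  let y : ℝ → Matrix (Fin n) (Fin n) ℂ := fun ε => x + ε • (a - x)
  have hy : Tendsto y (𝓝[>] 0) (𝓝 x) := by
    have hcont : Continuous y := by fun_prop
    simpa [y] using (hcont.tendsto 0).mono_left nhdsWithin_le_nhds
  have hε : ∀ᶠ ε : ℝ in 𝓝[>] 0, ε ∈ Ioc 0 1 := Ioc_mem_nhdsGT one_pos
  have hy_pos : ∀ ε ∈ Ioc (0 : ℝ) 1, (y ε).PosDef := fun ε hε => by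
    have hy_eq : y ε = (1 - ε) • x + ε • a := by simp only [y]; module
    rw [hy_eq]
    exact PosDef.posSemidef_add (hx.posSemidef.smul (sub_nonneg.2 hε.2)) (ha.smul hε.1)
  have hy_le : ∀ ε ∈ Ioc (0 : ℝ) 1, y ε ≤ a := fun ε hε => by
    have hsub : a - y ε = (1 - ε) • (a - x) := by simp only [y]; module
    rw [Matrix.le_iff, hsub]
    exact (Matrix.le_iff.1 hxa).smul (sub_nonneg.2 hε.2)
  have hfy : Tendsto (fun ε => cfc f (y ε)) (𝓝[>] 0) (𝓝 (cfc f x)) :=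
    hy.cfc isCompact_Icc f
      (hε.mono fun ε hε => spectrum_subset_Icc_of_le_algebraMap (hy_pos ε hε).posSemidef.nonneg
        ((hy_le ε hε).trans haM))
      (hε.mono fun ε hε => (hy_pos ε hε).isHermitian.isSelfAdjoint)
      (spectrum_subset_Icc_of_le_algebraMap hx (hxa.trans haM)) (.of_nonneg hx) hf
  exact le_of_tendsto_of_tendsto (hy.mul hfy) ((hy.mul_const _).mul hy) <| hε.mono fun ε hε =>
    mul_cfc_le_mul_cfc_div_mul_of_posDef hg haM (hy_pos ε hε) ha (hy_le ε hε)

lemma mul_cfc_mul_conjTranspose_le {m : Type*} [Fintype m] [DecidableEq m]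
    {c : Matrix (Fin n) m ℂ} (hf : ContinuousOn f (Icc 0 M))
    (hg : MatrixMonotoneOn n (fun t => f t / t) (Ioc 0 M)) (haM : a ≤ algebraMap ℝ _ M)
    (ha : a.PosDef) (hc : cᴴ * c ≤ 1) :
    c * cfc f (cᴴ * a * c) * cᴴ ≤ c * cᴴ * cfc f a * c * cᴴ := by
  set b := CFC.sqrt a with hb_def
  have hb : bᴴ = b := (CFC.sqrt_nonneg a).posSemidef.isHermitian
  have hbb : b * b = a := CFC.sqrt_mul_sqrt_self a ha.posSemidef.nonneg
  have hb_unit : IsUnit b := (CFC.isUnit_sqrt_iff a ha.posSemidef.nonneg).2 ha.isUnit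
  have hu : b * c * (b * c)ᴴ = b * (c * cᴴ) * b := by
    simp only [conjTranspose_mul, hb, Matrix.mul_assoc]
  have hu' : (b * c)ᴴ * (b * c) = cᴴ * a * c := by
    simp only [conjTranspose_mul, hb, ← hbb, Matrix.mul_assoc]
  have hua : b * c * (b * c)ᴴ ≤ a := by
    have hb_sa : IsSelfAdjoint b := hb
    simpa only [hu, mul_one, hbb] using
      hb_sa.conjugate_le_conjugate (mul_conjTranspose_le_one_iff.2 hc)
  have key := mul_cfc_le_mul_cfc_div_mul hf hg haM
    (posSemidef_self_mul_conjTranspose (b * c)).nonneg ha hua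
  have hleft : b * c * (b * c)ᴴ * cfc f (b * c * (b * c)ᴴ) =
      b * (c * cfc f (cᴴ * a * c) * cᴴ) * b := by
    rw [mul_conjTranspose_mul_cfc, hu']
    simp only [conjTranspose_mul, hb, Matrix.mul_assoc]
  have hright : b * c * (b * c)ᴴ * cfc (fun t => f t / t) a * (b * c * (b * c)ᴴ) =
      b * (c * cᴴ * cfc f a * c * cᴴ) * b := by
    rw [hu, ← sqrt_mul_cfc_div_mul_sqrt f ha, ← hb_def]
    simp only [Matrix.mul_assoc]
  rw [hleft, hright] at key
  rwa [← sub_nonneg, ← hb_unit.star_left_conjugate_nonneg_iff, star_eq_conjTranspose, hb, mul_sub,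
    sub_mul, sub_nonneg]

theorem stmt_7_general (n : ℕ) {m : Type*} [Fintype m] [DecidableEq m] (α : EReal) (hα : 0 < α)
    (f : ℝ → ℝ) (hfc : ContinuousOn f {x : ℝ | 0 ≤ x ∧ (x : EReal) < α})
    (hg : MatrixMonotoneOn n (fun t => f t / t) {x : ℝ | 0 < x ∧ (x : EReal) < α})
    (a : Matrix (Fin n) (Fin n) ℂ) (c : Matrix (Fin n) m ℂ) (ha : a.PosDef)
    (haspec : spectrum ℝ a ⊆ {x : ℝ | 0 < x ∧ (x : EReal) < α})
    (hc : (1 - cᴴ * c).PosSemidef) :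
    (c * cᴴ * cfc f a * c * cᴴ - c * cfc f (cᴴ * a * c) * cᴴ).PosSemidef := by
  -- inserting `0` covers the empty spectrum of the `0 × 0` matrix
  obtain ⟨M, hM, hM_max⟩ := ((finite_real_spectrum (A := a)).insert 0).isCompact.exists_isGreatest
    (insert_nonempty _ _)
  have hMα : (M : EReal) < α := by
    rcases hM with rfl | hM
    · exact hα
    · exact (haspec hM).2
  have hlt {t : ℝ} (ht : t ≤ M) : (t : EReal) < α := (EReal.coe_le_coe_iff.2 ht).trans_lt hMα
  have haM : a ≤ algebraMap ℝ _ M :=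
    le_algebraMap_of_spectrum_le (fun t ht => hM_max (.inr ht)) ha.isHermitian.isSelfAdjoint
  exact mul_cfc_mul_conjTranspose_le (hfc.mono fun t ht => ⟨ht.1, hlt ht.2⟩)
    (hg.mono fun t ht => ⟨ht.1, hlt ht.2⟩) haM ha hc

end MatrixMonotone

/-- The key intermediate inequality in the proof of Theorem 3.1, (iii) ⇒ (ii): if
`g(t) = f(t)/t` is `n`-monotone on `(0,α)`, `a` is positive definite with eigenvalues in `(0,α)`
and `c` is a contraction, then `c f(c*ac) c* ≤ c c* f(a) c c*` in the Loewner order. -/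
theorem stmt_7 (n : ℕ) (hn : 1 ≤ n) (α : EReal) (hα : 0 < α) (f : ℝ → ℝ)
    (hfc : ContinuousOn f {x : ℝ | 0 ≤ x ∧ (x : EReal) < α})
    (hg : MatrixMonotoneOn n (fun t => f t / t) {x : ℝ | 0 < x ∧ (x : EReal) < α})
    (a c : Matrix (Fin n) (Fin n) ℂ) (ha : a.PosDef)
    (haspec : spectrum ℝ a ⊆ {x : ℝ | 0 < x ∧ (x : EReal) < α})
    (hc : (1 - cᴴ * c).PosSemidef) :
    (c * cᴴ * cfc f a * c * cᴴ - c * cfc f (cᴴ * a * c) * cᴴ).PosSemidef :=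
  stmt_7_general n α hα f hfc hg a c ha haspec hc
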